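/- Let K be a field and F = (f_1,…,f_t) in K[x,y] (t ≥ 2), of y-degree at most d_y, generating a zero-dimensional ideal I. Let D ≥ max(1, Δ(F)), let S ∈ K[x]^{(d_y+D)×tD} be the extended Sylvester matrix of F in degree D, let H be a Hermite normal form of S, and let c_1,…,c_K be the nonzero columns of H. Then there exists K′ ≤ K such that π_{d_y+D}^{-1}(c_{K′}) is monic in y, and, taking K′ to be the largest such index, the sequence π_{d_y+D}^{-1}(c_K), π_{d_y+D}^{-1}(c_{K−1}), …, π_{d_y+D}^{-1}(c_{K′}) equals the detaching basis (A_0, A_1, …, A_{n_0}) of I in degree n_0. -/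

import Mathlib

noncomputable section

open Polynomial

/-- Bivariate polynomials `k[x][y]`: the inner `X` is `x`, the outer `X` is `y`. -/
abbrev Biv (k : Type*) [CommRing k] : Type _ := Polynomial (Polynomial k)

variable {k : Type*} [CommRing k]

/-- The leading monomial of `f`, as the pair (y-exponent, x-exponent), for the
lexicographic order induced by `x ≺ y`. -/
def lmon (f : Biv k) : ℕ × ℕ := (f.natDegree, f.leadingCoeff.natDegree)

/-- Divisibility of monomials: `x^{p.2} y^{p.1}` divides `x^{q.2} y^{q.1}`. -/
def monDvd (p q : ℕ × ℕ) : Prop := p.1 ≤ q.1 ∧ p.2 ≤ q.2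

/-- Lexicographic comparison of monomials, `y`-exponent first. -/
def monLt (p q : ℕ × ℕ) : Prop := p.1 < q.1 ∨ (p.1 = q.1 ∧ p.2 < q.2)

/-- The monomial `x^{m.2} y^{m.1}` occurs in `f` (has a nonzero coefficient). -/
def occursIn (f : Biv k) (m : ℕ × ℕ) : Prop := (f.coeff m.1).coeff m.2 ≠ 0

/-- `G` is a Gröbner basis of `I` for the lexicographic order with `x ≺ y`:
its elements are nonzero elements of `I`, and the leading monomial of any nonzero
element of `I` is divisible by the leading monomial of some element of `G`. -/
def IsGB (G : List (Biv k)) (I : Ideal (Biv k)) : Prop :=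
  (∀ g ∈ G, g ≠ 0 ∧ g ∈ I) ∧
  ∀ f ∈ I, f ≠ 0 → ∃ g ∈ G, monDvd (lmon g) (lmon f)

/-- `f` is monic w.r.t. lex `x ≺ y`: the coefficient of its leading monomial is `1`. -/
def lexMonic (f : Biv k) : Prop := f.leadingCoeff.Monic

/-- `g 0, …, g s` is the reduced minimal lexicographic Gröbner basis of `I`,
listed in decreasing order of leading monomials. -/
def IsReducedGB {s : ℕ} (g : Fin (s + 1) → Biv k) (I : Ideal (Biv k)) : Prop :=
  IsGB (List.ofFn g) I ∧
  (∀ j, lexMonic (g j)) ∧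
  (∀ j l, j ≠ l → ∀ m : ℕ × ℕ, occursIn (g j) m → ¬ monDvd (lmon (g l)) m) ∧
  (∀ j l : Fin (s + 1), j < l → monLt (lmon (g l)) (lmon (g j)))

/-- Every monomial of `f` of `y`-degree `< i` is reduced w.r.t. the family `g`. -/
def reducedBelow {s : ℕ} (g : Fin (s + 1) → Biv k) (i : ℕ) (f : Biv k) : Prop :=
  ∀ m : ℕ × ℕ, m.1 < i → occursIn f m → ∀ j, ¬ monDvd (lmon (g j)) m

/-- `A` is the detaching sequence associated to the reduced Gröbner basis `g` of `I`:
`A i = 0` for `i < n_s`, `A (n_j) = g j`, and otherwise `A i` is obtained from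
`y * A (i-1)` by reducing the terms of `y`-degree `< i` modulo `g`
(so `A i - y * A (i-1)` lies in `I` and has `y`-degree `< i`, and the part of `A i`
of `y`-degree `< i` is reduced w.r.t. `g`). -/
def IsDetachingSeq {s : ℕ} (g : Fin (s + 1) → Biv k) (I : Ideal (Biv k))
    (A : ℕ → Biv k) : Prop :=
  (∀ i, i < (g (Fin.last s)).natDegree → A i = 0) ∧
  (∀ j, A ((g j).natDegree) = g j) ∧
  (∀ i, (g (Fin.last s)).natDegree ≤ i → (∀ j, (g j).natDegree ≠ i) →
    (A i - Polynomial.X * A (i - 1)) ∈ I ∧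
    (A i - Polynomial.X * A (i - 1)).degree < (i : WithBot ℕ) ∧
    reducedBelow g i (A i))

/-- The inverse of the `K[x]`-module isomorphism `π_n`: it sends the vector
`[f_{n-1}, …, f_1, f_0]ᵀ` to the polynomial `f_0 + f_1 y + … + f_{n-1} y^{n-1}`. -/
def invPi {k : Type*} [CommRing k] {n : ℕ} (v : Fin n → Polynomial k) : Biv k :=
  ∑ i : Fin n, Polynomial.C (v i) * Polynomial.X ^ (n - 1 - (i : ℕ))

/-- The extended Sylvester matrix of `(f_1, …, f_t)` in degree `D`: the block matrix
`[S_1 … S_t]`, where `S_i` is the matrix, in the bases given by `π_D` and `π_{d_y+D}`,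
of the map `w ↦ w * f_i` from polynomials of `y`-degree `< D` to polynomials of
`y`-degree `< d_y + D`. Column `c` belongs to block `c / D` and represents
`y^{D - 1 - (c % D)} * f_{c/D}`; row `r` corresponds to the coefficient of
`y^{d_y + D - 1 - r}`. -/
def sylvester {k : Type*} [CommRing k] {t : ℕ} (f : Fin t → Biv k) (dy D : ℕ) :
    Matrix (Fin (dy + D)) (Fin (t * D)) (Polynomial k) :=
  fun r c =>
    if h : (c : ℕ) / D < t then
      (Polynomial.X ^ (D - 1 - (c : ℕ) % D) * f ⟨(c : ℕ) / D, h⟩).coeff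
        (dy + D - 1 - (r : ℕ))
    else 0

/-- Column `c` of the matrix `H` is nonzero. -/
def colNZ {α : Type*} [Zero α] {n m : ℕ} (H : Matrix (Fin n) (Fin m) α)
    (c : Fin m) : Prop :=
  ∃ r, H r c ≠ 0

/-- `H` is a (column-style, lower triangular) Hermite normal form of `M` over `K[x]`:
`H = M U` for an invertible `U`; the nonzero columns of `H` come first; the row indices
of the pivots (first nonzero entries of the nonzero columns) are strictly increasing;
the pivots are monic; and in each pivot row the entries in earlier columns have
`x`-degree strictly smaller than that of the pivot. -/
def IsHermiteForm {K : Type*} [Field K] {n m : ℕ}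
    (M H : Matrix (Fin n) (Fin m) (Polynomial K)) : Prop :=
  (∃ U : Matrix (Fin m) (Fin m) (Polynomial K), IsUnit U.det ∧ H = M * U) ∧
  (∀ c c' : Fin m, c ≤ c' → colNZ H c' → colNZ H c) ∧
  ∃ piv : Fin m → Fin n,
    (∀ c, colNZ H c →
      H (piv c) c ≠ 0 ∧ (∀ r, r < piv c → H r c = 0) ∧ (H (piv c) c).Monic) ∧
    (∀ c c', c < c' → colNZ H c' → piv c < piv c') ∧
    (∀ c c', c' < c → colNZ H c → (H (piv c) c').degree < (H (piv c) c).degree)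

/-!
Call a family `b_0, …, b_{N-1}` in an ideal `I` of `K[x][y]` a reduced triangular basis of `I` if
`b_i` has `y`-degree `i`, its leading coefficient in `K[x]` is monic of the least degree possible
in `I`, and its lower coefficients are reduced modulo the leading coefficients of the `b_j`,
`j < i`. Such a family is unique: the difference of two candidates for `b_i` would be an element
of `I` with a leading coefficient of too small a degree. The detaching basis is one, and so are
the last columns of the Hermite form: `D ≥ Δ(F)` puts every `A_i` in the column span, so every
`y`-degree `i ≤ n_0` is the degree of some column, and the pivot of that column divides the
leading coefficient of `A_i`.
-/

section LeadingRow

/-- Row `r` holds the first nonzero entry of the vector `v`. -/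
def IsLeadingRow {α : Type*} [Zero α] {n : ℕ} (v : Fin n → α) (r : Fin n) : Prop :=
  v r ≠ 0 ∧ ∀ r' < r, v r' = 0

variable {n : ℕ} {v : Fin n → k[X]} {r : Fin n} {j : ℕ}

theorem coeff_invPi (v : Fin n → k[X]) (hr : (r : ℕ) + j + 1 = n) : (invPi v).coeff j = v r := by
  have exponent_eq_iff (b : Fin n) : j = n - 1 - (b : ℕ) ↔ r = b := by
    rw [Fin.ext_iff]; omega
  simp only [invPi, finsetSum_coeff, coeff_C_mul_X_pow, exponent_eq_iff, Finset.sum_ite_eq,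
    Finset.mem_univ, if_true]

theorem degree_invPi_lt (v : Fin n → k[X]) : (invPi v).degree < n := by
  refine (degree_sum_le _ _).trans_lt ((Finset.sup_lt_iff (WithBot.bot_lt_coe n)).2 fun b _ ↦ ?_)
  exact (degree_C_mul_X_pow_le _ _).trans_lt (Nat.cast_lt.2 (by omega))

theorem invPi_coeff {p : Biv k} (hp : p.degree < n) :
    invPi (fun r : Fin n ↦ p.coeff (n - 1 - (r : ℕ))) = p := by
  ext1 j
  rcases lt_or_ge j n with hj | hj
  · rw [coeff_invPi (r := ⟨n - 1 - j, by omega⟩) _ (by dsimp only; omega)]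
    congr 1
    dsimp only
    omega
  · rw [coeff_eq_zero_of_degree_lt ((degree_invPi_lt _).trans_le (Nat.cast_le.2 hj)),
      coeff_eq_zero_of_degree_lt (hp.trans_le (Nat.cast_le.2 hj))]

theorem invPi_mulVec {m : ℕ} (M : Matrix (Fin n) (Fin m) k[X]) (u : Fin m → k[X]) :
    invPi (M.mulVec u) = ∑ c, C (u c) * invPi fun r ↦ M r c := by
  simp only [invPi, Matrix.mulVec, dotProduct, map_sum, map_mul, Finset.sum_mul, Finset.mul_sum]
  rw [Finset.sum_comm]
  exact Finset.sum_congr rfl fun c _ ↦ Finset.sum_congr rfl fun r _ ↦ by ring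

theorem IsLeadingRow.natDegree_invPi (h : IsLeadingRow v r) (hr : (r : ℕ) + j + 1 = n) :
    (invPi v).natDegree = j := by
  refine natDegree_eq_of_le_of_coeff_ne_zero ?_ (by rw [coeff_invPi v hr]; exact h.1)
  refine natDegree_le_iff_coeff_eq_zero.2 fun N hN ↦ ?_
  rcases lt_or_ge N n with hNn | hNn
  · rw [coeff_invPi (r := ⟨n - 1 - N, by omega⟩) v (by dsimp only; omega)]
    exact h.2 _ (Fin.lt_def.2 (by dsimp only; omega))
  · exact coeff_eq_zero_of_degree_lt ((degree_invPi_lt v).trans_le (Nat.cast_le.2 hNn))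

theorem IsLeadingRow.leadingCoeff_invPi (h : IsLeadingRow v r) : (invPi v).leadingCoeff = v r := by
  have hr : (r : ℕ) + (n - 1 - r) + 1 = n := by omega
  rw [leadingCoeff, h.natDegree_invPi hr, coeff_invPi v hr]

theorem exists_isLeadingRow_of_invPi_ne_zero (hv : invPi v ≠ 0) :
    ∃ r, IsLeadingRow v r ∧ (r : ℕ) + (invPi v).natDegree + 1 = n := by
  have hlt : (invPi v).natDegree < n := (natDegree_lt_iff_degree_lt hv).2 (degree_invPi_lt v)
  have hr : n - 1 - (invPi v).natDegree + (invPi v).natDegree + 1 = n := by omega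
  refine ⟨⟨n - 1 - (invPi v).natDegree, by omega⟩, ⟨?_, fun r' hr' ↦ ?_⟩, hr⟩
  · rw [← coeff_invPi v hr]
    exact leadingCoeff_ne_zero.2 hv
  · rw [Fin.lt_def] at hr'
    rw [← coeff_invPi (j := n - 1 - r') v (by omega)]
    exact coeff_eq_zero_of_natDegree_lt (by dsimp only at hr'; omega)

end LeadingRow

section Sylvester

variable {t dy D : ℕ} {f : Fin t → Biv k}

theorem invPi_sylvester_col (hdy : ∀ i, (f i).natDegree ≤ dy) (j : Fin t) (e : Fin D) :
    invPi (fun r ↦ sylvester f dy D r (finProdFinEquiv (j, e))) =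
      X ^ (D - 1 - (e : ℕ)) * f j := by
  have hdiv : ((finProdFinEquiv (j, e) : Fin (t * D)) : ℕ) / D = j :=
    congrArg (fun q ↦ (q.1 : ℕ)) (finProdFinEquiv.symm_apply_apply (j, e))
  have hmod : ((finProdFinEquiv (j, e) : Fin (t * D)) : ℕ) % D = e :=
    congrArg (fun q ↦ (q.2 : ℕ)) (finProdFinEquiv.symm_apply_apply (j, e))
  have hdeg : (X ^ (D - 1 - (e : ℕ)) * f j).degree < ((dy + D : ℕ) : WithBot ℕ) := by
    refine degree_le_natDegree.trans_lt (Nat.cast_lt.2 ?_)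
    have hmul := natDegree_mul_le_of_le (natDegree_X_pow_le (R := k[X]) (D - 1 - e)) (hdy j)
    omega
  simpa only [_root_.sylvester, hdiv, hmod, j.is_lt, dif_pos] using invPi_coeff hdeg

theorem invPi_sylvester_mulVec (hdy : ∀ i, (f i).natDegree ≤ dy) (u : Fin (t * D) → k[X]) :
    invPi ((sylvester f dy D).mulVec u) =
      ∑ j, invPi (fun e ↦ u (finProdFinEquiv (j, e))) * f j := by
  rw [invPi_mulVec, ← finProdFinEquiv.sum_comp, Fintype.sum_prod_type]
  refine Finset.sum_congr rfl fun j _ ↦ ?_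
  rw [invPi, Finset.sum_mul]
  exact Finset.sum_congr rfl fun e _ ↦ by rw [invPi_sylvester_col hdy, mul_assoc]

theorem invPi_sylvester_mulVec_mem_span (hdy : ∀ i, (f i).natDegree ≤ dy)
    (u : Fin (t * D) → k[X]) :
    invPi ((sylvester f dy D).mulVec u) ∈ Ideal.span (Set.range f) := by
  rw [invPi_sylvester_mulVec hdy]
  exact Ideal.sum_mem _ fun j _ ↦ Ideal.mul_mem_left _ _ (Ideal.subset_span ⟨j, rfl⟩)

theorem exists_invPi_sylvester_mulVec_eq (hdy : ∀ i, (f i).natDegree ≤ dy) {w : Fin t → Biv k}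
    (hw : ∀ j, (w j).degree < D) :
    ∃ u, invPi ((sylvester f dy D).mulVec u) = ∑ j, w j * f j := by
  refine ⟨fun c ↦ (w (finProdFinEquiv.symm c).1).coeff (D - 1 - (finProdFinEquiv.symm c).2), ?_⟩
  rw [invPi_sylvester_mulVec hdy]
  refine Finset.sum_congr rfl fun j _ ↦ ?_
  simp only [Equiv.symm_apply_apply, invPi_coeff (hw j)]

end Sylvester

section Pivots

/-- `piv` gives the pivot rows of a matrix in column echelon form: on the nonzero columns it
points to the first nonzero entry, and it is strictly increasing there. Its values on the zero
columns are irrelevant. -/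
structure IsPivotMap {α : Type*} [Zero α] {n m : ℕ} (H : Matrix (Fin n) (Fin m) α)
    (piv : Fin m → Fin n) : Prop where
  isLeadingRow : ∀ c, colNZ H c → IsLeadingRow (fun r ↦ H r c) (piv c)
  lt_of_lt : ∀ c c', c < c' → colNZ H c' → piv c < piv c'

/-- The pivot rows of a Hermite normal form over `k[x]`: the pivots are moreover monic, and they
dominate the entries to their left. -/
structure IsHermitePivotMap {n m : ℕ} (H : Matrix (Fin n) (Fin m) k[X])
    (piv : Fin m → Fin n) : Prop extends IsPivotMap H piv where
  monic : ∀ c, colNZ H c → (H (piv c) c).Monic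
  degree_lt : ∀ c c', c' < c → colNZ H c → (H (piv c) c').degree < (H (piv c) c).degree

namespace IsPivotMap

variable {n m : ℕ} {piv : Fin m → Fin n}

theorem lt_of_piv_lt {α : Type*} [Zero α] {H : Matrix (Fin n) (Fin m) α} (h : IsPivotMap H piv)
    {c c' : Fin m} (hc : colNZ H c) (hlt : piv c < piv c') : c < c' := by
  by_contra! hle
  rcases hle.lt_or_eq with hlt' | rfl
  · exact hlt.asymm (h.lt_of_lt _ _ hlt' hc)
  · exact hlt.false

theorem mulVec_apply_of_le {R : Type*} [NonUnitalNonAssocSemiring R]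
    {H : Matrix (Fin n) (Fin m) R} (h : IsPivotMap H piv) {u : Fin m → R} {c : Fin m}
    (hu : ∀ b < c, colNZ H b → u b = 0) {r : Fin n} (hr : r ≤ piv c) :
    H.mulVec u r = H r c * u c := by
  refine Finset.sum_eq_single c (fun b _ hbc ↦ ?_) fun hc ↦ absurd (Finset.mem_univ c) hc
  by_contra hne
  have hb : colNZ H b := ⟨r, left_ne_zero_of_mul hne⟩
  rcases hbc.lt_or_gt with hlt | hgt
  · exact right_ne_zero_of_mul hne (hu b hlt hb)
  · exact left_ne_zero_of_mul hne ((h.isLeadingRow b hb).2 r (hr.trans_lt (h.lt_of_lt c b hgt hb)))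

theorem exists_dvd_of_isLeadingRow {R : Type*} [NonUnitalSemiring R] [NoZeroDivisors R]
    {H : Matrix (Fin n) (Fin m) R} (h : IsPivotMap H piv) {u : Fin m → R} {r : Fin n}
    (hr : IsLeadingRow (H.mulVec u) r) :
    ∃ c, colNZ H c ∧ piv c = r ∧ H r c ∣ H.mulVec u r := by
  obtain ⟨b, -, hb⟩ : ∃ b ∈ Finset.univ, H r b * u b ≠ 0 :=
    Finset.exists_ne_zero_of_sum_ne_zero hr.1
  obtain ⟨c, ⟨hcH, hcu⟩, hmin⟩ := WellFounded.has_min (wellFounded_lt (α := Fin m))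
    {c | colNZ H c ∧ u c ≠ 0} ⟨b, ⟨r, left_ne_zero_of_mul hb⟩, right_ne_zero_of_mul hb⟩
  have mulVec_eq {r' : Fin n} (hr' : r' ≤ piv c) : H.mulVec u r' = H r' c * u c :=
    h.mulVec_apply_of_le (fun b hbc hbH ↦ by_contra fun hbu ↦ hmin b ⟨hbH, hbu⟩ hbc) hr'
  have hpiv : piv c = r := by
    rcases lt_trichotomy (piv c) r with hlt | heq | hgt
    · have hzero := hr.2 _ hlt
      rw [mulVec_eq le_rfl] at hzero
      exact absurd hzero (mul_ne_zero (h.isLeadingRow c hcH).1 hcu)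
    · exact heq
    · refine absurd ?_ hr.1
      have hzero : H r c = 0 := (h.isLeadingRow c hcH).2 r hgt
      rw [mulVec_eq hgt.le, hzero, zero_mul]
  exact ⟨c, hcH, hpiv, u c, mulVec_eq hpiv.ge⟩

theorem col_add_eq_of_piv_add_eq {α : Type*} [Zero α] {H : Matrix (Fin n) (Fin m) α}
    (h : IsPivotMap H piv) {Kn N : ℕ} (hle : Kn ≤ m)
    (hKn : ∀ c : Fin m, colNZ H c ↔ (c : ℕ) < Kn) {col : Fin N → Fin m}
    (hcol : ∀ i, colNZ H (col i)) (hrow : ∀ i, (piv (col i) : ℕ) + i + 1 = n) (i : Fin N) :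
    (col i : ℕ) + i + 1 = Kn := by
  have piv_lt_piv_succ (c : Fin m) (hm : (c : ℕ) + 1 < m) (hc : (c : ℕ) + 1 < Kn) :
      (piv c : ℕ) < piv ⟨c + 1, hm⟩ :=
    h.lt_of_lt c ⟨c + 1, hm⟩ (Fin.lt_def.2 (Nat.lt_succ_self c)) ((hKn _).2 hc)
  obtain ⟨i, hi⟩ := i
  have hrow_i : (piv (col ⟨i, hi⟩) : ℕ) + i + 1 = n := hrow ⟨i, hi⟩
  change (col ⟨i, hi⟩ : ℕ) + i + 1 = Kn
  by_contra hne
  induction i with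
  | zero =>
    have hlt := (hKn _).1 (hcol ⟨0, hi⟩)
    have hgt := piv_lt_piv_succ (col ⟨0, hi⟩) (by omega) (by omega)
    omega
  | succ i ih =>
    set c := col ⟨i + 1, hi⟩
    set c' := col ⟨i, Nat.lt_of_succ_lt hi⟩
    have hrow' : (piv c' : ℕ) + i + 1 = n := hrow ⟨i, Nat.lt_of_succ_lt hi⟩
    have hidx' : (c' : ℕ) + i + 1 = Kn := by_contra (ih _ hrow')
    have hlt : (c : ℕ) < c' := h.lt_of_piv_lt (hcol _) (Fin.lt_def.2 (by omega))
    have hm : (c : ℕ) + 1 < m := by omega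
    have hgt := piv_lt_piv_succ c hm (by omega)
    have hgt' : (piv ⟨c + 1, hm⟩ : ℕ) < piv c' :=
      h.lt_of_lt _ c' (Fin.lt_def.2 (by dsimp only; omega)) (hcol _)
    omega

end IsPivotMap

theorem exists_forall_iff_lt_of_isLowerSet {m : ℕ} {s : Set (Fin m)} (hs : IsLowerSet s) :
    ∃ l ≤ m, ∀ c : Fin m, c ∈ s ↔ (c : ℕ) < l := by
  classical
  have hbound : ∃ l, ∀ c ∈ s, (c : ℕ) < l := ⟨m, fun c _ ↦ c.is_lt⟩
  refine ⟨Nat.find hbound, Nat.find_min' hbound fun c _ ↦ c.is_lt, fun c ↦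
    ⟨Nat.find_spec hbound c, fun hc ↦ ?_⟩⟩
  obtain ⟨c', hc', hle⟩ : ∃ c' ∈ s, c ≤ c' := by simpa using Nat.find_min hbound hc
  exact hs hle hc'

end Pivots

section TriangularBasis

/-- The family `b 0, …, b (N - 1)` is the reduced triangular basis over `k[x]` of the part of `I`
of `y`-degree less than `N`: `b i` has `y`-degree `i`, its leading coefficient is monic of the
least degree among the elements of `I` of `y`-degree `i`, and its lower coefficients are reduced
modulo the leading coefficients of the other members. -/
structure IsReducedTriangularBasis (I : Ideal (Biv k)) {N : ℕ} (b : Fin N → Biv k) : Prop where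
  mem : ∀ i, b i ∈ I
  natDegree_eq : ∀ i, (b i).natDegree = i
  lexMonic : ∀ i, lexMonic (b i)
  natDegree_leadingCoeff_le : ∀ i : Fin N, ∀ p ∈ I, p ≠ 0 → p.natDegree = i →
    (b i).leadingCoeff.natDegree ≤ p.leadingCoeff.natDegree
  degree_coeff_lt : ∀ i j : Fin N, j < i → ((b i).coeff j).degree < (b j).leadingCoeff.degree

namespace IsReducedTriangularBasis

variable {I : Ideal (Biv k)} {N : ℕ} {b b' : Fin N → Biv k}

theorem ne_zero [Nontrivial k] (hb : IsReducedTriangularBasis I b) (i : Fin N) : b i ≠ 0 :=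
  leadingCoeff_ne_zero.1 (hb.lexMonic i).ne_zero

variable [Nontrivial k] (hb : IsReducedTriangularBasis I b) (hb' : IsReducedTriangularBasis I b')
include hb hb'

theorem degree_leadingCoeff_eq (i : Fin N) :
    (b i).leadingCoeff.degree = (b' i).leadingCoeff.degree := by
  rw [degree_eq_natDegree (hb.lexMonic i).ne_zero, degree_eq_natDegree (hb'.lexMonic i).ne_zero,
    Nat.cast_inj]
  exact (hb.natDegree_leadingCoeff_le i _ (hb'.mem i) (hb'.ne_zero i) (hb'.natDegree_eq i)).antisymm
    (hb'.natDegree_leadingCoeff_le i _ (hb.mem i) (hb.ne_zero i) (hb.natDegree_eq i))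

theorem degree_coeff_sub_lt {i j : Fin N} (hji : j ≤ i) :
    ((b i - b' i).coeff j).degree < (b j).leadingCoeff.degree := by
  rw [coeff_sub]
  rcases hji.lt_or_eq with hlt | rfl
  · refine (degree_sub_le _ _).trans_lt (max_lt (hb.degree_coeff_lt i j hlt) ?_)
    rw [hb.degree_leadingCoeff_eq hb']
    exact hb'.degree_coeff_lt i j hlt
  · have hcoeff : (b j).coeff j = (b j).leadingCoeff := by rw [leadingCoeff, hb.natDegree_eq]
    have hcoeff' : (b' j).coeff j = (b' j).leadingCoeff := by rw [leadingCoeff, hb'.natDegree_eq]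
    rw [hcoeff, hcoeff']
    refine degree_sub_lt_left (hb.degree_leadingCoeff_eq hb' j) (hb.lexMonic j).ne_zero ?_
    rw [(hb.lexMonic j).leadingCoeff, (hb'.lexMonic j).leadingCoeff]

theorem unique : b = b' := by
  funext i
  by_contra hne
  have hsub : b i - b' i ≠ 0 := sub_ne_zero.2 hne
  have hle : (b i - b' i).natDegree ≤ i :=
    natDegree_sub_le_of_le (hb.natDegree_eq i).le (hb'.natDegree_eq i).le |>.trans (max_self _).le
  let j : Fin N := ⟨(b i - b' i).natDegree, by omega⟩
  have hlt : (b i - b' i).leadingCoeff.degree < (b j).leadingCoeff.degree :=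
    hb.degree_coeff_sub_lt hb' (i := i) (j := j) hle
  have hmin := hb.natDegree_leadingCoeff_le j _ (I.sub_mem (hb.mem i) (hb'.mem i)) hsub rfl
  exact hmin.not_gt (natDegree_lt_natDegree (leadingCoeff_ne_zero.2 hsub) hlt)

end IsReducedTriangularBasis

theorem IsHermitePivotMap.isReducedTriangularBasis {n m N : ℕ} {H : Matrix (Fin n) (Fin m) k[X]}
    {piv : Fin m → Fin n} (h : IsHermitePivotMap H piv) {I : Ideal (Biv k)}
    (hmem : ∀ c, invPi (fun r ↦ H r c) ∈ I) {col : Fin N → Fin m} (hcol : ∀ i, colNZ H (col i))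
    (hrow : ∀ i, (piv (col i) : ℕ) + i + 1 = n)
    (hmin : ∀ i : Fin N, ∀ p ∈ I, p ≠ 0 → p.natDegree = i →
      (H (piv (col i)) (col i)).natDegree ≤ p.leadingCoeff.natDegree) :
    IsReducedTriangularBasis I fun i ↦ invPi fun r ↦ H r (col i) := by
  have leadingCoeff_eq (i) :
      (invPi fun r ↦ H r (col i)).leadingCoeff = H (piv (col i)) (col i) :=
    (h.isLeadingRow _ (hcol i)).leadingCoeff_invPi
  refine ⟨fun _ ↦ hmem _, fun i ↦ (h.isLeadingRow _ (hcol i)).natDegree_invPi (hrow i),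
    fun i ↦ ?_, fun i p hp hp0 hdeg ↦ ?_, fun i j hji ↦ ?_⟩
  · rw [lexMonic, leadingCoeff_eq]
    exact h.monic _ (hcol i)
  · rw [leadingCoeff_eq]
    exact hmin i p hp hp0 hdeg
  · rw [leadingCoeff_eq, coeff_invPi _ (hrow j)]
    have hpiv : piv (col i) < piv (col j) := by
      have := hrow i
      have := hrow j
      rw [Fin.lt_def] at *
      omega
    exact h.degree_lt _ _ (h.lt_of_piv_lt (hcol i) hpiv) (hcol j)

end TriangularBasis

section HermiteForm

variable {K : Type*} [Field K] {n m : ℕ} {M H : Matrix (Fin n) (Fin m) K[X]}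

namespace IsHermiteForm

theorem range_mulVec (hH : IsHermiteForm M H) : Set.range H.mulVec = Set.range M.mulVec := by
  obtain ⟨⟨U, hU, rfl⟩, -⟩ := hH
  refine subset_antisymm ?_ ?_
  · rintro _ ⟨u, rfl⟩
    exact ⟨U.mulVec u, Matrix.mulVec_mulVec u M U⟩
  · rintro _ ⟨v, rfl⟩
    refine ⟨U⁻¹.mulVec v, ?_⟩
    rw [Matrix.mulVec_mulVec, Matrix.mul_assoc, Matrix.mul_nonsing_inv U hU, Matrix.mul_one]

theorem exists_isHermitePivotMap (hH : IsHermiteForm M H) : ∃ piv, IsHermitePivotMap H piv := by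
  obtain ⟨-, -, piv, hpiv, hlt, hdeg⟩ := hH
  exact ⟨piv, ⟨fun c hc ↦ ⟨(hpiv c hc).1, (hpiv c hc).2.1⟩, hlt⟩, fun c hc ↦ (hpiv c hc).2.2, hdeg⟩

theorem exists_colNZ_iff_lt (hH : IsHermiteForm M H) :
    ∃ Kn ≤ m, ∀ c : Fin m, colNZ H c ↔ (c : ℕ) < Kn :=
  exists_forall_iff_lt_of_isLowerSet (s := {c | colNZ H c}) fun c' c hle hc' ↦ hH.2.1 c c' hle hc'

variable {I : Ideal (Biv K)} {N : ℕ} {b : Fin N → Biv K}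

theorem invPi_col_mem (hH : IsHermiteForm M H) (hM : ∀ u, invPi (M.mulVec u) ∈ I) (c : Fin m) :
    invPi (fun r ↦ H r c) ∈ I := by
  obtain ⟨u, hu⟩ : H.mulVec (Pi.single c 1) ∈ Set.range M.mulVec :=
    hH.range_mulVec ▸ Set.mem_range_self _
  rw [Matrix.mulVec_single_one] at hu
  change invPi (H.col c) ∈ I
  rw [← hu]
  exact hM u

theorem exists_col_of_invPi_mulVec_eq (hH : IsHermiteForm M H) {piv : Fin m → Fin n}
    (hpiv : IsPivotMap H piv) {p : Biv K} (hp : p ≠ 0) (hpM : ∃ u, invPi (M.mulVec u) = p) :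
    ∃ c, colNZ H c ∧ (piv c : ℕ) + p.natDegree + 1 = n ∧
      (H (piv c) c).natDegree ≤ p.leadingCoeff.natDegree := by
  obtain ⟨u, rfl⟩ := hpM
  obtain ⟨v, hv⟩ : M.mulVec u ∈ Set.range H.mulVec := hH.range_mulVec ▸ Set.mem_range_self u
  rw [← hv] at hp ⊢
  obtain ⟨r, hr, hrow⟩ := exists_isLeadingRow_of_invPi_ne_zero hp
  obtain ⟨c, hc, rfl, hdvd⟩ := hpiv.exists_dvd_of_isLeadingRow hr
  refine ⟨c, hc, hrow, ?_⟩
  rw [hr.leadingCoeff_invPi]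
  exact natDegree_le_of_dvd hdvd hr.1

theorem exists_last_cols_eq (hH : IsHermiteForm M H) (hM : ∀ u, invPi (M.mulVec u) ∈ I)
    (hb : IsReducedTriangularBasis I b) (hbM : ∀ i, ∃ u, invPi (M.mulVec u) = b i) :
    ∃ Kn ≤ m, (∀ c : Fin m, colNZ H c ↔ (c : ℕ) < Kn) ∧ N ≤ Kn ∧
      ∀ (i : Fin N) (c : Fin m), (c : ℕ) + i + 1 = Kn → (invPi fun r ↦ H r c) = b i := by
  obtain ⟨piv, hpiv⟩ := hH.exists_isHermitePivotMap
  obtain ⟨Kn, hle, hKn⟩ := hH.exists_colNZ_iff_lt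
  have exists_col (i : Fin N) :
      ∃ c, colNZ H c ∧ (piv c : ℕ) + i + 1 = n ∧
        (H (piv c) c).natDegree ≤ (b i).leadingCoeff.natDegree := by
    simpa only [hb.natDegree_eq] using
      hH.exists_col_of_invPi_mulVec_eq hpiv.toIsPivotMap (hb.ne_zero i) (hbM i)
  choose col hcol hrow hlc using exists_col
  have hcols := hpiv.isReducedTriangularBasis (hH.invPi_col_mem hM) hcol hrow fun i p hp hp0 hdeg ↦
    (hlc i).trans (hb.natDegree_leadingCoeff_le i p hp hp0 hdeg)
  have hidx := hpiv.col_add_eq_of_piv_add_eq hle hKn hcol hrow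
  refine ⟨Kn, hle, hKn, ?_, fun i c hc ↦ ?_⟩
  · cases N with
    | zero => exact Nat.zero_le Kn
    | succ N => exact (Nat.le_add_left _ _).trans (hidx (Fin.last N)).le
  · obtain rfl : c = col i := Fin.ext (by have := hidx i; omega)
    exact congrFun (hcols.unique hb) i

end IsHermiteForm

end HermiteForm

section Groebner

variable {s : ℕ} {I : Ideal (Biv k)} {g : Fin (s + 1) → Biv k}

theorem occursIn_lmon {p : Biv k} (hp : p ≠ 0) : occursIn p (lmon p) := by
  simpa [occursIn, lmon] using hp

namespace IsReducedGB

variable (hg : IsReducedGB g I)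
include hg

theorem ne_zero (j : Fin (s + 1)) : g j ≠ 0 := (hg.1.1 _ (List.mem_ofFn.2 ⟨j, rfl⟩)).1

theorem mem (j : Fin (s + 1)) : g j ∈ I := (hg.1.1 _ (List.mem_ofFn.2 ⟨j, rfl⟩)).2

theorem exists_monDvd {p : Biv k} (hp : p ∈ I) (hp0 : p ≠ 0) :
    ∃ j, monDvd (lmon (g j)) (lmon p) := by
  obtain ⟨_, hq, hdvd⟩ := hg.1.2 p hp hp0
  obtain ⟨j, rfl⟩ := List.mem_ofFn.1 hq
  exact ⟨j, hdvd⟩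

theorem eq_of_monDvd {j l : Fin (s + 1)} (hdvd : monDvd (lmon (g l)) (lmon (g j))) : j = l :=
  by_contra fun hne ↦ hg.2.2.1 j l hne _ (occursIn_lmon (hg.ne_zero j)) hdvd

theorem natDegree_leadingCoeff_le {j l : Fin (s + 1)} (hle : (g l).natDegree ≤ (g j).natDegree) :
    (g j).leadingCoeff.natDegree ≤ (g l).leadingCoeff.natDegree := by
  by_contra! hlt
  obtain rfl := hg.eq_of_monDvd ⟨hle, hlt.le⟩
  exact hlt.false

theorem antitone_natDegree : Antitone fun j ↦ (g j).natDegree := by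
  intro j l hjl
  rcases hjl.lt_or_eq with hlt | rfl
  · rcases hg.2.2.2 j l hlt with h | h
    exacts [h.le, h.1.le]
  · rfl

theorem monDvd_lmon_zero_of_monic {p : Biv k} (hp : p ∈ I) (hmonic : p.Monic) :
    monDvd (lmon (g 0)) (lmon p) := by
  have : Nontrivial k[X] := nontrivial_iff.1 ⟨g 0, 0, hg.ne_zero 0⟩
  obtain ⟨j, hj⟩ := hg.exists_monDvd hp hmonic.ne_zero
  have hconst : (g j).leadingCoeff.natDegree ≤ 0 := by
    simpa [lmon, hmonic.leadingCoeff] using hj.2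
  obtain rfl : 0 = j :=
    hg.eq_of_monDvd ⟨hg.antitone_natDegree (Fin.zero_le j), hconst.trans (Nat.zero_le _)⟩
  exact hj

theorem natDegree_zero_le_of_monic {p : Biv k} (hp : p ∈ I) (hmonic : p.Monic) :
    (g 0).natDegree ≤ p.natDegree :=
  (hg.monDvd_lmon_zero_of_monic hp hmonic).1

theorem monic_zero_of_monic {p : Biv k} (hp : p ∈ I) (hmonic : p.Monic) : (g 0).Monic := by
  have hconst : (g 0).leadingCoeff.natDegree ≤ 0 := by
    simpa [lmon, hmonic.leadingCoeff] using (hg.monDvd_lmon_zero_of_monic hp hmonic).2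
  exact (hg.2.1 0).natDegree_eq_zero.1 (Nat.le_zero.1 hconst)

theorem natDegree_last_le {p : Biv k} (hp : p ∈ I) (hp0 : p ≠ 0) :
    (g (Fin.last s)).natDegree ≤ p.natDegree := by
  obtain ⟨j, hj⟩ := hg.exists_monDvd hp hp0
  exact (hg.antitone_natDegree (Fin.le_last j)).trans hj.1

end IsReducedGB

end Groebner

section ZeroDimensional

theorem exists_monic_aeval_mem {R S : Type*} [CommRing R] [CommRing S] [Algebra R S]
    (I : Ideal S) [Module.Finite R (S ⧸ I)] (a : S) : ∃ p : R[X], p.Monic ∧ aeval a p ∈ I := by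
  obtain ⟨p, hp, hroot⟩ := IsIntegral.of_finite R (Ideal.Quotient.mkₐ R I a)
  refine ⟨p, hp, Ideal.Quotient.eq_zero_iff_mem.1 ?_⟩
  rwa [← aeval_def, aeval_algHom_apply] at hroot

variable (I : Ideal (Biv k)) [Module.Finite k (Biv k ⧸ I)]

theorem exists_monic_C_mem : ∃ p : k[X], p.Monic ∧ (C p : Biv k) ∈ I := by
  obtain ⟨p, hp, hmem⟩ := exists_monic_aeval_mem (R := k) I (C X)
  have haeval : aeval (C X : Biv k) p = C p := by
    rw [← algebraMap_eq, aeval_algebraMap_apply, aeval_X_left_apply]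
  exact ⟨p, hp, haeval ▸ hmem⟩

theorem exists_monic_mem : ∃ p : Biv k, p.Monic ∧ p ∈ I := by
  obtain ⟨p, hp, hmem⟩ := exists_monic_aeval_mem (R := k) I X
  exact ⟨p.map C, hp.map C, aeval_X_left_eq_map (S := k[X]) p ▸ hmem⟩

end ZeroDimensional

section Detaching

theorem natDegree_eq_of_degree_sub_lt {R : Type*} [Ring R] {p q : R[X]}
    (hlt : (p - q).degree < q.degree) : p.natDegree = q.natDegree := by
  rw [← sub_add_cancel p q, natDegree_add_eq_right_of_degree_lt hlt]

theorem leadingCoeff_eq_of_degree_sub_lt {R : Type*} [Ring R] {p q : R[X]}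
    (hlt : (p - q).degree < q.degree) : p.leadingCoeff = q.leadingCoeff := by
  rw [← sub_add_cancel p q, leadingCoeff_add_of_degree_lt hlt]

namespace IsDetachingSeq

variable {s : ℕ} {I : Ideal (Biv k)} {g : Fin (s + 1) → Biv k} {A : ℕ → Biv k}

variable (hA : IsDetachingSeq g I A) (hg : IsReducedGB g I)
include hA hg

theorem mem (i : ℕ) : A i ∈ I := by
  induction i using Nat.strong_induction_on with | _ i ih
  rcases lt_or_ge i (g (Fin.last s)).natDegree with hlt | hge
  · rw [hA.1 i hlt]
    exact I.zero_mem
  by_cases hgen : ∃ j, (g j).natDegree = i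
  · obtain ⟨j, rfl⟩ := hgen
    rw [hA.2.1 j]
    exact hg.mem j
  · have hpos : 0 < i := (Nat.zero_le _).trans_lt (hge.lt_of_ne fun h ↦ hgen ⟨_, h⟩)
    rw [← sub_add_cancel (A i) (X * A (i - 1))]
    exact I.add_mem (hA.2.2 i hge (not_exists.1 hgen)).1
      (I.mul_mem_left X (ih (i - 1) (Nat.sub_one_lt_of_lt hpos)))

theorem exists_leadingCoeff_eq {i : ℕ} (hi : (g (Fin.last s)).natDegree ≤ i) :
    (A i).natDegree = i ∧ ∃ j, (A i).leadingCoeff = (g j).leadingCoeff ∧ (g j).natDegree ≤ i ∧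
      ∀ l, (g l).natDegree ≤ i → (g l).natDegree ≤ (g j).natDegree := by
  induction i, hi using Nat.le_induction with
  | base =>
    rw [hA.2.1]
    exact ⟨rfl, Fin.last s, rfl, le_rfl, fun _ h ↦ h⟩
  | succ i hi ih =>
    by_cases hgen : ∃ j, (g j).natDegree = i + 1
    · obtain ⟨j, hj⟩ := hgen
      rw [← hj, hA.2.1 j]
      exact ⟨rfl, j, rfl, le_rfl, fun _ h ↦ h⟩
    obtain ⟨hdeg, j, hlc, hj, hmax⟩ := ih
    obtain ⟨-, hlt, -⟩ := hA.2.2 (i + 1) (by omega) (not_exists.1 hgen)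
    have hne : A i ≠ 0 := by
      rw [← leadingCoeff_ne_zero, hlc, leadingCoeff_ne_zero]
      exact hg.ne_zero j
    have : Nontrivial k[X] := nontrivial_iff.1 ⟨g 0, 0, hg.ne_zero 0⟩
    have hdegX : (X * A i).natDegree = i + 1 := by rw [natDegree_X_mul hne, hdeg]
    have hlt : (A (i + 1) - X * A i).degree < (X * A i).degree := by
      rwa [(degree_eq_iff_natDegree_eq_of_pos i.succ_pos).2 hdegX]
    refine ⟨(natDegree_eq_of_degree_sub_lt hlt).trans hdegX, j, ?_, by omega, fun l hl ↦ ?_⟩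
    · rw [leadingCoeff_eq_of_degree_sub_lt hlt, leadingCoeff_monic_mul monic_X, hlc]
    · exact hmax l (Nat.le_of_lt_succ (hl.lt_of_ne fun h ↦ hgen ⟨l, h⟩))

theorem reducedBelow {i : ℕ} (hi : (g (Fin.last s)).natDegree ≤ i) : reducedBelow g i (A i) := by
  by_cases h : ∃ j, (g j).natDegree = i
  · obtain ⟨j, rfl⟩ := h
    rw [hA.2.1 j]
    intro m hm hocc l hdvd
    by_cases hjl : j = l
    · subst hjl
      exact hm.not_ge hdvd.1
    · exact hg.2.2.1 j l hjl m hocc hdvd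
  · exact (hA.2.2 i hi (not_exists.1 h)).2.2

theorem natDegree_leadingCoeff_le {p : Biv k} (hp : p ∈ I) (hp0 : p ≠ 0) :
    (A p.natDegree).leadingCoeff.natDegree ≤ p.leadingCoeff.natDegree := by
  obtain ⟨-, j, hlc, -, hmax⟩ := hA.exists_leadingCoeff_eq hg (hg.natDegree_last_le hp hp0)
  obtain ⟨l, hl⟩ := hg.exists_monDvd hp hp0
  rw [hlc]
  exact (hg.natDegree_leadingCoeff_le (hmax l hl.1)).trans hl.2

theorem degree_coeff_lt {i j : ℕ} (hj : (g (Fin.last s)).natDegree ≤ j) (hji : j < i) :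
    ((A i).coeff j).degree < (A j).leadingCoeff.degree := by
  obtain ⟨-, l, hlc, hl, -⟩ := hA.exists_leadingCoeff_eq hg hj
  rw [hlc]
  by_contra! hle
  have hcoeff : (A i).coeff j ≠ 0 := by
    rintro h0
    rw [h0, degree_zero, le_bot_iff, degree_eq_bot, leadingCoeff_eq_zero] at hle
    exact hg.ne_zero l hle
  exact hA.reducedBelow hg (hj.trans hji.le) (j, ((A i).coeff j).natDegree) hji
    (leadingCoeff_ne_zero.2 hcoeff) l ⟨hl, natDegree_le_natDegree hle⟩

theorem isReducedTriangularBasis (hlast : (g (Fin.last s)).natDegree = 0) (N : ℕ) :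
    IsReducedTriangularBasis I fun i : Fin N ↦ A i where
  mem i := hA.mem hg i
  natDegree_eq i := (hA.exists_leadingCoeff_eq hg (by omega)).1
  lexMonic i := by
    obtain ⟨-, j, hlc, -⟩ := hA.exists_leadingCoeff_eq hg (i := i) (by omega)
    rw [lexMonic, hlc]
    exact hg.2.1 j
  natDegree_leadingCoeff_le i p hp hp0 hdeg := by
    rw [← hdeg]
    exact hA.natDegree_leadingCoeff_le hg hp hp0
  degree_coeff_lt i j hji := hA.degree_coeff_lt hg (by omega) hji

end IsDetachingSeq

end Detaching

/-- let `F = (f_1, …, f_t)` (`t ≥ 2`), of `y`-degree at most `d_y`,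
generate a zero-dimensional ideal `I`, let `D ≥ max(1, Δ(F))`, let `S` be the extended
Sylvester matrix of `F` in degree `D` and `H` a Hermite normal form of `S`. Then, among
the nonzero columns `c_1, …, c_K` of `H`, there is a largest `K' ≤ K` with
`π⁻¹(c_{K'})` monic in `y`, and `π⁻¹(c_K), π⁻¹(c_{K-1}), …, π⁻¹(c_{K'})` equals the
detaching basis `(A_0, A_1, …, A_{n_0})` of `I` in degree `n_0` (so `K' = K - n_0`).
Columns are 0-indexed here: the nonzero columns are those of index `< Kn`, and column
`Kn - 1 - i` gives `A i` for `0 ≤ i ≤ n_0`. -/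
theorem hermite_detaching {K : Type*} [Field K] {t s : ℕ} (ht : 2 ≤ t)
    (f : Fin t → Biv K) (dy D : ℕ)
    (hdy : ∀ i, (f i).natDegree ≤ dy) (hD : 1 ≤ D)
    (I : Ideal (Biv K)) (hI : I = Ideal.span (Set.range f))
    (hdim : FiniteDimensional K (Biv K ⧸ I))
    (g : Fin (s + 1) → Biv K) (hg : IsReducedGB g I)
    (A : ℕ → Biv K) (hA : IsDetachingSeq g I A)
    (hDelta : ∀ i, (g (Fin.last s)).natDegree ≤ i → i ≤ (g 0).natDegree →
      ∃ w : Fin t → Biv K,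
        (∀ j, (w j).degree < (D : WithBot ℕ)) ∧ A i = ∑ j, w j * f j)
    (H : Matrix (Fin (dy + D)) (Fin (t * D)) (Polynomial K))
    (hH : IsHermiteForm (sylvester f dy D) H) :
    ∃ Kn, Kn ≤ t * D ∧ (∀ c : Fin (t * D), colNZ H c ↔ (c : ℕ) < Kn) ∧
      (g 0).natDegree < Kn ∧
      (∀ c : Fin (t * D), (c : ℕ) = Kn - 1 - (g 0).natDegree →
        (invPi fun r => H r c).Monic) ∧
      (∀ c : Fin (t * D), Kn - 1 - (g 0).natDegree < (c : ℕ) → (c : ℕ) < Kn →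
        ¬ (invPi fun r => H r c).Monic) ∧
      (∀ i ≤ (g 0).natDegree, ∀ c : Fin (t * D), (c : ℕ) = Kn - 1 - i →
        (invPi fun r => H r c) = A i) := by
  obtain ⟨q, hq, hqI⟩ := exists_monic_C_mem I
  obtain ⟨p, hp, hpI⟩ := exists_monic_mem I
  have hlast : (g (Fin.last s)).natDegree = 0 := by
    simpa using hg.natDegree_last_le hqI (C_ne_zero.2 hq.ne_zero)
  have hbasis := hA.isReducedTriangularBasis hg hlast ((g 0).natDegree + 1)
  have hspan (i : Fin ((g 0).natDegree + 1)) :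
      ∃ u, invPi ((sylvester f dy D).mulVec u) = A i := by
    obtain ⟨w, hw, hAw⟩ := hDelta i (by omega) (Nat.le_of_lt_succ i.is_lt)
    exact hAw ▸ exists_invPi_sylvester_mulVec_eq hdy hw
  obtain ⟨Kn, hKn, hnz, hlt, hcols⟩ := hH.exists_last_cols_eq
    (fun u ↦ hI ▸ invPi_sylvester_mulVec_mem_span hdy u) hbasis hspan
  have col_eq (i : ℕ) (hi : i ≤ (g 0).natDegree) (c : Fin (t * D)) (hc : (c : ℕ) = Kn - 1 - i) :
      (invPi fun r ↦ H r c) = A i :=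
    hcols ⟨i, Nat.lt_succ_of_le hi⟩ c (by dsimp only; omega)
  refine ⟨Kn, hKn, hnz, hlt, fun c hc ↦ ?_, fun c hc hcKn hmonic ↦ ?_, col_eq⟩
  · rw [col_eq _ le_rfl c hc, hA.2.1 0]
    exact hg.monic_zero_of_monic hpI hp
  · have hi : Kn - 1 - c < (g 0).natDegree := by omega
    rw [col_eq (Kn - 1 - c) hi.le c (by omega)] at hmonic
    have hge := hg.natDegree_zero_le_of_monic (hA.mem hg _) hmonic
    rw [hbasis.natDegree_eq ⟨_, Nat.lt_succ_of_lt hi⟩] at hge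
    exact hi.not_ge hge
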